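/- For all positive integers n_u, n_y, n_p, if n_a = n_b and n_d = n_c ≥ 1, then the LPV-ARX parameter count n_y·(n_u·∑_{i=0}^{n_a}(1+n_p)^{2i+1} + n_y·∑_{j=1}^{n_d}(1+n_p)^{2j}) is greater than or equal to the LPV-MAX parameter count n_y·(n_u·∑_{i=1}^{n_b+1}(1+n_p)^i + n_y·∑_{j=2}^{n_c+1}(1+n_p)^j), with strict inequality whenever n_p ≥ 1 and n_a ≥ 1. -/

import Mathlib

open Finset

/-!
After shifting the summation indices, the `i`-th terms of the two input sums are
`(1 + n_p) ^ (i + 1)` and `(1 + n_p) ^ (2 * i + 1)`, and the `j`-th terms of the two output sums are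
`(1 + n_p) ^ (j + 1)` and `(1 + n_p) ^ (2 * j)`. As the base is at least `1`, the exponents decide
every comparison; the input terms with `i = 1` give the strictness.
-/

theorem sum_Icc_add_right {M α : Type*} [AddCommMonoid M] [AddCommMonoid α] [PartialOrder α]
    [IsOrderedCancelAddMonoid α] [ExistsAddOfLE α] [LocallyFiniteOrder α] (f : α → M) (a b c : α) :
    ∑ i ∈ Icc a b, f (i + c) = ∑ i ∈ Icc (a + c) (b + c), f i := by
  rw [← map_add_right_Icc, sum_map]
  rfl

theorem sum_pow_Icc_add_le_sum_pow {R : Type*} [Semiring R] [PartialOrder R] [IsOrderedRing R]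
    {x : R} (hx : 1 ≤ x) {a b c : ℕ} {e : ℕ → ℕ} (he : ∀ i ∈ Icc a b, i + c ≤ e i) :
    ∑ i ∈ Icc (a + c) (b + c), x ^ i ≤ ∑ i ∈ Icc a b, x ^ e i := by
  rw [← sum_Icc_add_right]
  exact sum_le_sum fun i hi ↦ pow_le_pow_right₀ hx (he i hi)

section StrictOrderedSemiring

variable {R : Type*} [Semiring R] [PartialOrder R] [IsStrictOrderedRing R] {x : R}

theorem sum_pow_Icc_add_lt_sum_pow (hx : 1 < x) {a b c : ℕ} {e : ℕ → ℕ}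
    (he : ∀ i ∈ Icc a b, i + c ≤ e i) (hlt : ∃ i ∈ Icc a b, i + c < e i) :
    ∑ i ∈ Icc (a + c) (b + c), x ^ i < ∑ i ∈ Icc a b, x ^ e i := by
  rw [← sum_Icc_add_right]
  obtain ⟨k, hk, hke⟩ := hlt
  exact sum_lt_sum (fun i hi ↦ pow_le_pow_right₀ hx.le (he i hi)) ⟨k, hk, pow_lt_pow_right₀ hx hke⟩

theorem lpv_arx_ge_lpv_max_general {u y : R} (hu : 0 ≤ u) (hy : 0 ≤ y) (hx : 1 ≤ x) (m n : ℕ) :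
    (y * (u * ∑ i ∈ Icc 1 (m + 1), x ^ i + y * ∑ j ∈ Icc 2 (n + 1), x ^ j) ≤
      y * (u * ∑ i ∈ range (m + 1), x ^ (2 * i + 1) + y * ∑ j ∈ Icc 1 n, x ^ (2 * j))) ∧
    (0 < u → 0 < y → 1 < x → 1 ≤ m →
      y * (u * ∑ i ∈ Icc 1 (m + 1), x ^ i + y * ∑ j ∈ Icc 2 (n + 1), x ^ j) <
        y * (u * ∑ i ∈ range (m + 1), x ^ (2 * i + 1) + y * ∑ j ∈ Icc 1 n, x ^ (2 * j))) := by
  have input_exponent_le : ∀ i ∈ Icc 0 m, i + 1 ≤ 2 * i + 1 := fun i _ ↦ by lia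
  have output_exponent_le : ∀ j ∈ Icc 1 n, j + 1 ≤ 2 * j := fun j hj ↦ by
    have := (mem_Icc.mp hj).1
    lia
  have output_le : ∑ j ∈ Icc 2 (n + 1), x ^ j ≤ ∑ j ∈ Icc 1 n, x ^ (2 * j) :=
    sum_pow_Icc_add_le_sum_pow hx output_exponent_le
  rw [Nat.range_succ_eq_Icc_zero]
  refine ⟨?_, fun hu_pos hy_pos hx_lt hm ↦ ?_⟩
  · have input_le : ∑ i ∈ Icc 1 (m + 1), x ^ i ≤ ∑ i ∈ Icc 0 m, x ^ (2 * i + 1) :=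
      sum_pow_Icc_add_le_sum_pow hx input_exponent_le
    gcongr
  · have input_lt : ∑ i ∈ Icc 1 (m + 1), x ^ i < ∑ i ∈ Icc 0 m, x ^ (2 * i + 1) :=
      sum_pow_Icc_add_lt_sum_pow hx_lt input_exponent_le
        ⟨1, mem_Icc.mpr ⟨zero_le_one, hm⟩, by lia⟩
    exact mul_lt_mul_of_pos_left (add_lt_add_of_lt_of_le
      (mul_lt_mul_of_pos_left input_lt hu_pos) (mul_le_mul_of_nonneg_left output_le hy)) hy_pos

end StrictOrderedSemiring

/-- For positive `n_u, n_y` and orders `n_a = n_b ≥ 0`, `n_d = n_c ≥ 1`, the LPV-ARX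
parameter count is at least the LPV-MAX parameter count, with strict inequality
whenever `n_p ≥ 1` and `n_a ≥ 1`. -/
theorem lpv_arx_ge_lpv_max (nu ny np na nc : ℕ)
    (hnu : 1 ≤ nu) (hny : 1 ≤ ny) (hnc : 1 ≤ nc) :
    (ny * (nu * ∑ i ∈ Icc 1 (na + 1), (1 + np) ^ i +
        ny * ∑ j ∈ Icc 2 (nc + 1), (1 + np) ^ j) ≤
      ny * (nu * ∑ i ∈ range (na + 1), (1 + np) ^ (2 * i + 1) +
        ny * ∑ j ∈ Icc 1 nc, (1 + np) ^ (2 * j))) ∧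
    (1 ≤ np → 1 ≤ na →
      ny * (nu * ∑ i ∈ Icc 1 (na + 1), (1 + np) ^ i +
          ny * ∑ j ∈ Icc 2 (nc + 1), (1 + np) ^ j) <
        ny * (nu * ∑ i ∈ range (na + 1), (1 + np) ^ (2 * i + 1) +
          ny * ∑ j ∈ Icc 1 nc, (1 + np) ^ (2 * j))) := by
  have h := lpv_arx_ge_lpv_max_general nu.zero_le ny.zero_le (Nat.le_add_right 1 np) na nc
  exact ⟨h.1, fun hnp ↦ h.2 hnu hny (Nat.lt_add_of_pos_right hnp)⟩
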